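/- Let A ∈ ℂ^{n×n} be sectorial. Then there exists a matrix R ∈ ℂ^{n×n} with rank(R) = prank(A) such that A − R is Hermitian positive definite. -/

import Mathlib

noncomputable section

open Matrix
open scoped Classical ComplexOrder

namespace LowPrank

variable {n : ℕ}

/-- A matrix is sectorial if its numerical range does not contain `0`
(`star x ⬝ᵥ x = 1` encodes `‖x‖₂ = 1`). -/
def IsSectorial (A : Matrix (Fin n) (Fin n) ℂ) : Prop :=
  ∀ x : Fin n → ℂ, star x ⬝ᵥ x = 1 → star x ⬝ᵥ A.mulVec x ≠ 0

/-- The diagonal unitary matrix `diag (e^{iφ₁}, …, e^{iφₙ})`. -/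
def phaseDiag (φ : Fin n → ℝ) : Matrix (Fin n) (Fin n) ℂ :=
  Matrix.diagonal fun k => Complex.exp (Complex.I * (φ k : ℂ))

/-- `A = Tᴴ diag (e^{iφ₁}, …, e^{iφₙ}) T` with `T` invertible. -/
def IsSectorialDecomp (A T : Matrix (Fin n) (Fin n) ℂ) (φ : Fin n → ℝ) : Prop :=
  IsUnit T ∧ A = Tᴴ * phaseDiag φ * T

/-- `φ` is the (sorted, normalized) vector of canonical phases of `A`:
nonincreasing, spread `< π`, midpoint of the range in `(-π, π]`, and realizing a
sectorial decomposition of `A`. -/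
def IsCanonicalPhases (A : Matrix (Fin n) (Fin n) ℂ) (φ : Fin n → ℝ) : Prop :=
  Antitone φ ∧ (∀ i j, φ i - φ j < Real.pi) ∧
    (-Real.pi < ((⨆ i, φ i) + ⨅ i, φ i) / 2) ∧ (((⨆ i, φ i) + ⨅ i, φ i) / 2 ≤ Real.pi) ∧
    ∃ T, IsSectorialDecomp A T φ

/-- The canonical phases `φ₁(A) ≥ ⋯ ≥ φₙ(A)` of a sectorial matrix
(`phases A k` is the `(k+1)`-st largest canonical phase). -/
noncomputable def phases (A : Matrix (Fin n) (Fin n) ℂ) : Fin n → ℝ :=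
  if h : ∃ φ, IsCanonicalPhases A φ then h.choose else 0

/-- The phase-rank: the number of nonzero canonical phases. -/
noncomputable def prank (A : Matrix (Fin n) (Fin n) ℂ) : ℕ :=
  {k : Fin n | phases A k ≠ 0}.ncard

/-- Positive-imaginary: sectorial with all canonical phases in `[0, π)`. -/
def PositiveImaginary (A : Matrix (Fin n) (Fin n) ℂ) : Prop :=
  IsSectorial A ∧ ∀ k, phases A k ∈ Set.Ico 0 Real.pi

/-- Symmetric gauge function. -/
structure IsSymmetricGauge (Φ : (Fin n → ℝ) → ℝ) : Prop where
  pos : ∀ x, x ≠ 0 → 0 < Φ x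
  smul : ∀ (ρ : ℝ) (x), Φ (ρ • x) = |ρ| * Φ x
  subadd : ∀ x y, Φ (x + y) ≤ Φ x + Φ y
  perm : ∀ (σ : Equiv.Perm (Fin n)) (x), Φ (x ∘ σ) = Φ x
  abs : ∀ x, Φ (fun k => |x k|) = Φ x

/-- The set `S_p(A, r)` of `r`-half-truncations of `A`. -/
def Sp (A : Matrix (Fin n) (Fin n) ℂ) (r : ℕ) : Set (Matrix (Fin n) (Fin n) ℂ) :=
  {E | ∃ T, IsSectorialDecomp A T (phases A) ∧
    E = Tᴴ * Matrix.diagonal (fun k : Fin n =>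
      if (k : ℕ) < r then Complex.exp (Complex.I * ((phases A k / 2 : ℝ) : ℂ)) else 1) * T}

/-!
Given a sectorial decomposition `A = Tᴴ diag (e^{iφₖ}) T`, replacing each entry `e^{iφₖ}` with
`φₖ ≠ 0` by `2` makes the diagonal factor positive definite, and changes exactly those entries
because `|e^{iφₖ}| = 1`. So the perturbation has rank `prank A`.

The decomposition itself comes from the Toeplitz–Hausdorff theorem: the numerical range is compact
and convex, so if it misses `0` it lies in an open half-plane. After a rotation the Hermitian part
of `A` is positive definite, hence simultaneously diagonalizable by congruence with the
skew-Hermitian part, which gives `e^{iθ} A = Sᴴ diag (1 + iμₖ) S` with `μₖ` real.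
-/

section NumericalRange

open ComplexConjugate

lemma exists_norm_eq_one_im_conj_mul_add_mul_eq_zero (p q : ℂ) :
    ∃ c : ℂ, ‖c‖ = 1 ∧ (conj c * p + c * q).im = 0 := by
  obtain ⟨c, hc, hreal⟩ := Complex.exists_norm_eq_mul_self (q - conj p)
  refine ⟨c, hc, ?_⟩
  have him : (c * (q - conj p)).im = 0 := by rw [← hreal, Complex.ofReal_im]
  simp only [Complex.mul_im, Complex.sub_im, Complex.sub_re, Complex.conj_re, Complex.conj_im,
    Complex.add_im] at him ⊢
  linarith

/-- After multiplying `x` by a unit scalar, `B (x + t y) (x + t y)` is `B x x` times a real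
quadratic polynomial in the real variable `t`, with constant term `1` and leading coefficient
`-m`. -/
lemma exists_ne_zero_apply_self_eq_zero {E : Type*} [AddCommGroup E] [Module ℂ E]
    (B : E →ₗ⋆[ℂ] E →ₗ[ℂ] ℂ) {x y : E} (hx : x ≠ 0) {m : ℝ} (hm : 0 < m)
    (hxy : B y y = -m * B x x) : ∃ z ≠ 0, B z z = 0 := by
  by_cases hBx : B x x = 0
  · exact ⟨x, hx, hBx⟩
  obtain ⟨c, hc, him⟩ :=
    exists_norm_eq_one_im_conj_mul_add_mul_eq_zero (B x y / B x x) (B y x / B x x)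
  have hcc : conj c * c = 1 := by rw [Complex.conj_mul', hc, Complex.ofReal_one, one_pow]
  set l : ℝ := (conj c * (B x y / B x x) + c * (B y x / B x x)).re with hl
  have hcross : conj c * B x y + c * B y x = l * B x x := by
    rw [hl, Complex.conj_eq_iff_re.mp (Complex.conj_eq_iff_im.mpr him)]
    field_simp
  obtain ⟨t, ht⟩ : ∃ t : ℝ, -m * (t * t) + l * t + 1 = 0 := by
    refine exists_quadratic_eq_zero (neg_ne_zero.mpr hm.ne') ⟨√(discrim (-m) l 1), ?_⟩
    refine (Real.mul_self_sqrt ?_).symm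
    rw [discrim]
    nlinarith [sq_nonneg l]
  refine ⟨c • x + (t : ℂ) • y, fun hz => ?_, ?_⟩
  · have hsmul : c • x = -(t : ℂ) • y := by rw [neg_smul]; exact eq_neg_of_add_eq_zero_left hz
    have hval := congrArg (fun z => B z z) hsmul
    simp only [map_smulₛₗ, map_neg, LinearMap.smul_apply, smul_eq_mul,
      Complex.conj_ofReal, RingHom.id_apply, hxy] at hval
    have hzero : ((1 + m * t ^ 2 : ℝ) : ℂ) * B x x = 0 := by
      push_cast
      linear_combination hval - B x x * hcc
    exact (mul_ne_zero (Complex.ofReal_ne_zero.mpr (by positivity)) hBx) hzero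
  · have htC : -(m : ℂ) * (t * t) + l * t + 1 = 0 := by exact_mod_cast ht
    simp only [map_add, map_smulₛₗ, LinearMap.add_apply, LinearMap.smul_apply, smul_eq_mul,
      Complex.conj_ofReal, RingHom.id_apply]
    linear_combination B x x * hcc + t * hcross + (t * t : ℂ) * hxy + B x x * htC

variable {E : Type*} [NormedAddCommGroup E] [InnerProductSpace ℂ E]

/-- The numerical range `W(T) = {⟪x, T x⟫ : ‖x‖ = 1}` of a linear operator on a complex inner
product space. -/
def numericalRange (T : E →ₗ[ℂ] E) : Set ℂ :=
  (fun x => inner ℂ x (T x)) '' Metric.sphere 0 1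

lemma inner_div_norm_sq_mem_numericalRange (T : E →ₗ[ℂ] E) {x : E} (hx : x ≠ 0) :
    inner ℂ x (T x) / (‖x‖ : ℂ) ^ 2 ∈ numericalRange T := by
  refine ⟨(‖x‖⁻¹ : ℂ) • x, by simpa using norm_smul_inv_norm (𝕜 := ℂ) hx, ?_⟩
  simp only [map_smul, inner_smul_left, inner_smul_right, map_inv₀, Complex.conj_ofReal]
  field_simp

/-- The **Toeplitz–Hausdorff theorem**. -/
theorem convex_numericalRange (T : E →ₗ[ℂ] E) : Convex ℝ (numericalRange T) := by
  rw [convex_iff_forall_pos]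
  rintro _ ⟨x, hx, rfl⟩ _ ⟨y, hy, rfl⟩ a b ha hb hab
  rw [mem_sphere_zero_iff_norm] at hx hy
  set r : ℂ := a • inner ℂ x (T x) + b • inner ℂ y (T y) with hr
  let B : E →ₗ⋆[ℂ] E →ₗ[ℂ] ℂ := (innerₛₗ ℂ).compl₂ (T - r • LinearMap.id)
  have hB (z : E) : B z z = inner ℂ z (T z) - r * (‖z‖ : ℂ) ^ 2 := by
    simp [B, inner_sub_right, inner_smul_right, inner_self_eq_norm_sq_to_K]
  have hx0 : x ≠ 0 := norm_ne_zero_iff.mp (by rw [hx]; exact one_ne_zero)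
  -- The values of `B` at `x` and `y` have weighted sum `a (B x x) + b (B y y) = r - r = 0`.
  have hxy : B y y = -(a / b : ℝ) * B x x := by
    have habC : (a : ℂ) + b = 1 := by exact_mod_cast hab
    have hbC : (b : ℂ) ≠ 0 := Complex.ofReal_ne_zero.mpr hb.ne'
    rw [hB, hB, hx, hy]
    simp only [Complex.real_smul] at hr
    push_cast
    field_simp
    linear_combination -r * habC - hr
  obtain ⟨z, hz, hBz⟩ := exists_ne_zero_apply_self_eq_zero B hx0 (div_pos ha hb) hxy
  have hzC : (‖z‖ : ℂ) ≠ 0 := Complex.ofReal_ne_zero.mpr (norm_ne_zero_iff.mpr hz)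
  have hrz : inner ℂ z (T z) / (‖z‖ : ℂ) ^ 2 = r := by
    rw [div_eq_iff (pow_ne_zero 2 hzC)]
    exact sub_eq_zero.mp ((hB z).symm.trans hBz)
  exact hrz ▸ inner_div_norm_sq_mem_numericalRange T hz

lemma isCompact_numericalRange [FiniteDimensional ℂ E] (T : E →ₗ[ℂ] E) :
    IsCompact (numericalRange T) := by
  have := FiniteDimensional.proper ℂ E
  have hT : Continuous T := T.continuous_of_finiteDimensional
  exact (isCompact_sphere 0 1).image (by fun_prop)

lemma exists_forall_mem_re_exp_mul_pos {K : Set ℂ} (hconv : Convex ℝ K) (hclosed : IsClosed K)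
    (h0 : 0 ∉ K) : ∃ θ : ℝ, ∀ z ∈ K, 0 < (Complex.exp (Complex.I * θ) * z).re := by
  obtain ⟨f, u, hf0, hf⟩ := geometric_hahn_banach_point_closed hconv hclosed h0
  rw [map_zero] at hf0
  set w : ℂ := conj ((InnerProductSpace.toDual ℝ ℂ).symm f)
  have hfw (z : ℂ) : f z = (w * z).re := by
    rw [← InnerProductSpace.toDual_symm_apply (𝕜 := ℝ), Complex.inner, mul_comm]
  refine ⟨w.arg, fun z hz => ?_⟩
  have hpos : 0 < ‖w‖ * (Complex.exp (Complex.I * w.arg) * z).re := by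
    rw [← Complex.re_ofReal_mul, ← mul_assoc, mul_comm Complex.I, Complex.norm_mul_exp_arg_mul_I,
      ← hfw]
    exact hf0.trans (hf z hz)
  exact pos_of_mul_pos_right hpos (norm_nonneg w)

end NumericalRange

section Congruence

open scoped ComplexStarModule

lemma rank_conjTranspose_mul_diagonal_mul {ι K : Type*} [Fintype ι] [DecidableEq ι] [Field K]
    [StarRing K] {T : Matrix ι ι K} (hT : IsUnit T) (d : ι → K) :
    (Tᴴ * diagonal d * T).rank = {i | d i ≠ 0}.ncard := by
  have hdet : IsUnit T.det := (isUnit_iff_isUnit_det T).mp hT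
  have hdetH : IsUnit Tᴴ.det := by
    rw [det_conjTranspose]
    exact hdet.star
  rw [rank_mul_eq_left_of_isUnit_det _ _ hdet, rank_mul_eq_right_of_isUnit_det _ _ hdetH,
    rank_diagonal, ← Nat.card_eq_fintype_card]
  exact Nat.card_coe_set_eq {i | d i ≠ 0}

lemma star_dotProduct_realPart_mulVec {ι : Type*} [Fintype ι] (A : Matrix ι ι ℂ) (x : ι → ℂ) :
    star x ⬝ᵥ (ℜ A : Matrix ι ι ℂ) *ᵥ x = ((star x ⬝ᵥ A *ᵥ x).re : ℂ) := by
  have hstar : star x ⬝ᵥ Aᴴ *ᵥ x = star (star x ⬝ᵥ A *ᵥ x) := by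
    rw [star_dotProduct, star_mulVec, conjTranspose_conjTranspose, ← dotProduct_mulVec]
  rw [realPart_apply_coe, smul_mulVec, add_mulVec, dotProduct_smul, dotProduct_add,
    star_eq_conjTranspose, hstar, Complex.star_def, Complex.add_conj, Complex.real_smul]
  push_cast
  ring

open scoped MatrixOrder Matrix.Norms.L2Operator in
/-- Simultaneous diagonalization by congruence: writing `H = Cᴴ C`, one diagonalizes the Hermitian
matrix `C⁻ᴴ K C⁻¹` by a unitary. -/
lemma exists_eq_conjTranspose_mul_self_and_eq_conjTranspose_mul_diagonal_mul
    {ι 𝕜 : Type*} [Fintype ι] [DecidableEq ι] [RCLike 𝕜] {H K : Matrix ι ι 𝕜} (hH : H.PosDef)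
    (hK : K.IsHermitian) :
    ∃ (S : Matrix ι ι 𝕜) (μ : ι → ℝ), IsUnit S ∧ H = Sᴴ * S ∧
      K = Sᴴ * diagonal (fun i => (μ i : 𝕜)) * S := by
  obtain ⟨C, hC, rfl⟩ :=
    CStarAlgebra.isStrictlyPositive_iff_eq_star_mul_self.mp hH.isStrictlyPositive
  have hCinv : C⁻¹ * C = 1 := nonsing_inv_mul C ((isUnit_iff_isUnit_det C).mp hC)
  have hM : ((C⁻¹)ᴴ * K * C⁻¹).IsHermitian := isHermitian_conjTranspose_mul_mul C⁻¹ hK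
  obtain ⟨U, μ, hUU, hspec⟩ : ∃ (U : Matrix ι ι 𝕜) (μ : ι → ℝ), U * Uᴴ = 1 ∧
      (C⁻¹)ᴴ * K * C⁻¹ = U * diagonal (fun i => (μ i : 𝕜)) * Uᴴ :=
    ⟨hM.eigenvectorUnitary.val, hM.eigenvalues, Unitary.coe_mul_star_self _, hM.spectral_theorem⟩
  refine ⟨Uᴴ * C, μ, (IsUnit.of_mul_eq_one_right _ hUU).mul hC, ?_, ?_⟩
  · calc Cᴴ * C = Cᴴ * (U * Uᴴ) * C := by rw [hUU, Matrix.mul_one]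
      _ = (Uᴴ * C)ᴴ * (Uᴴ * C) := by
        simp only [conjTranspose_mul, conjTranspose_conjTranspose, Matrix.mul_assoc]
  · calc K = (C⁻¹ * C)ᴴ * K * (C⁻¹ * C) := by
          rw [hCinv, conjTranspose_one, Matrix.one_mul, Matrix.mul_one]
      _ = Cᴴ * ((C⁻¹)ᴴ * K * C⁻¹) * C := by simp only [conjTranspose_mul, Matrix.mul_assoc]
      _ = (Uᴴ * C)ᴴ * diagonal (fun i => (μ i : 𝕜)) * (Uᴴ * C) := by
        rw [hspec]
        simp only [conjTranspose_mul, conjTranspose_conjTranspose, Matrix.mul_assoc]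

lemma exists_eq_conjTranspose_mul_diagonal_one_add_I_mul_mul {ι : Type*} [Fintype ι]
    [DecidableEq ι] {A : Matrix ι ι ℂ} (hA : (ℜ A : Matrix ι ι ℂ).PosDef) :
    ∃ (S : Matrix ι ι ℂ) (μ : ι → ℝ), IsUnit S ∧
      A = Sᴴ * diagonal (fun i => 1 + Complex.I * (μ i : ℂ)) * S := by
  obtain ⟨S, μ, hS, hre, him⟩ :=
    exists_eq_conjTranspose_mul_self_and_eq_conjTranspose_mul_diagonal_mul hA (ℑ A).2
  refine ⟨S, μ, hS, ?_⟩
  have hdiag : diagonal (fun i => 1 + Complex.I * (μ i : ℂ)) =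
      1 + Complex.I • diagonal fun i => (μ i : ℂ) := by
    rw [← diagonal_one, ← diagonal_smul, diagonal_add]
    rfl
  conv_lhs => rw [← realPart_add_I_smul_imaginaryPart A, hre, him]
  rw [hdiag, Matrix.mul_add, Matrix.add_mul, Matrix.mul_one, Matrix.mul_smul, Matrix.smul_mul]
  rfl

end Congruence

namespace IsSectorialDecomp

variable {A T : Matrix (Fin n) (Fin n) ℂ} {φ : Fin n → ℝ}

lemma exp_smul (h : IsSectorialDecomp A T φ) (θ : ℝ) :
    IsSectorialDecomp (Complex.exp (Complex.I * θ) • A) T (fun k => φ k + θ) := by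
  have hphase : phaseDiag (fun k => φ k + θ) = Complex.exp (Complex.I * θ) • phaseDiag φ := by
    rw [phaseDiag, phaseDiag, ← diagonal_smul]
    congr 1
    ext k
    rw [Pi.smul_apply, smul_eq_mul, ← Complex.exp_add]
    push_cast
    ring_nf
  refine ⟨h.1, ?_⟩
  rw [hphase, Matrix.mul_smul, Matrix.smul_mul, ← h.2]

lemma comp_perm (h : IsSectorialDecomp A T φ) (σ : Equiv.Perm (Fin n)) :
    IsSectorialDecomp A (T.submatrix σ id) (φ ∘ σ) := by
  have hphase : phaseDiag (φ ∘ σ) = (phaseDiag φ).submatrix σ σ := by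
    rw [phaseDiag, phaseDiag, submatrix_diagonal_equiv]
    rfl
  refine ⟨(isUnit_submatrix_equiv σ (Equiv.refl _)).mpr h.1, ?_⟩
  rw [hphase, conjTranspose_submatrix, submatrix_mul_equiv, submatrix_mul_equiv, submatrix_id_id]
  exact h.2

lemma conjTranspose_mul_mul (h : IsSectorialDecomp A T φ) {S : Matrix (Fin n) (Fin n) ℂ}
    (hS : IsUnit S) : IsSectorialDecomp (Sᴴ * A * S) (T * S) φ := by
  refine ⟨h.1.mul hS, ?_⟩
  conv_lhs => rw [h.2]
  simp only [conjTranspose_mul, Matrix.mul_assoc]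

lemma diagonal {z : Fin n → ℂ} (hz : ∀ k, z k ≠ 0) :
    IsSectorialDecomp (Matrix.diagonal z) (Matrix.diagonal fun k => (√‖z k‖ : ℂ))
      (fun k => (z k).arg) := by
  constructor
  · rw [isUnit_diagonal, Pi.isUnit_iff]
    intro k
    have := norm_pos_iff.mpr (hz k)
    exact isUnit_iff_ne_zero.mpr (Complex.ofReal_ne_zero.mpr (by positivity))
  · rw [diagonal_conjTranspose, phaseDiag, diagonal_mul_diagonal, diagonal_mul_diagonal]
    congr 1
    ext k
    have hsqrt : (√‖z k‖ : ℂ) * √‖z k‖ = ‖z k‖ := by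
      exact_mod_cast Real.mul_self_sqrt (norm_nonneg (z k))
    simp only [Pi.star_apply, Complex.star_def, Complex.conj_ofReal]
    rw [mul_right_comm, hsqrt, mul_comm Complex.I, Complex.norm_mul_exp_arg_mul_I]

theorem exists_rank_eq_sub_posDef (h : IsSectorialDecomp A T φ) :
    ∃ R : Matrix (Fin n) (Fin n) ℂ, R.rank = {k | φ k ≠ 0}.ncard ∧ (A - R).PosDef := by
  let p : Fin n → ℂ := fun k => if φ k = 0 then 1 else 2
  let d : Fin n → ℂ := fun k => Complex.exp (Complex.I * φ k) - p k
  have hd (k : Fin n) : d k ≠ 0 ↔ φ k ≠ 0 := by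
    by_cases hk : φ k = 0
    · simp [d, p, hk]
    · simp only [d, p, hk, if_false, ne_eq, not_false_eq_true, iff_true, sub_eq_zero]
      intro hexp
      have hnorm := congrArg norm hexp
      rw [mul_comm, Complex.norm_exp_ofReal_mul_I] at hnorm
      norm_num at hnorm
  have hp : (Matrix.diagonal p).PosDef := by
    refine PosDef.diagonal fun k => ?_
    by_cases hk : φ k = 0 <;> simp [p, hk]
  have hsub : A - Tᴴ * Matrix.diagonal d * T = Tᴴ * Matrix.diagonal p * T := by
    conv_lhs => rw [h.2]
    rw [← Matrix.sub_mul, ← Matrix.mul_sub, phaseDiag, diagonal_sub]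
    simp only [d, sub_sub_cancel]
  refine ⟨Tᴴ * Matrix.diagonal d * T, ?_, ?_⟩
  · simp only [rank_conjTranspose_mul_diagonal_mul h.1, hd]
  · rw [hsub]
    exact hp.conjTranspose_mul_mul_same (mulVec_injective_of_isUnit h.1)

end IsSectorialDecomp

section CanonicalPhases

open scoped ComplexStarModule

variable {A : Matrix (Fin n) (Fin n) ℂ}

lemma star_dotProduct_mulVec_eq_inner {ι : Type*} [Fintype ι] [DecidableEq ι] (A : Matrix ι ι ℂ)
    (x : EuclideanSpace ℂ ι) :
    star x.ofLp ⬝ᵥ A *ᵥ x.ofLp = inner ℂ x (toEuclideanLin A x) := by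
  rw [EuclideanSpace.inner_eq_star_dotProduct, dotProduct_comm]
  rfl

lemma IsSectorial.zero_notMem_numericalRange (hA : IsSectorial A) :
    0 ∉ numericalRange (toEuclideanLin A) := by
  rintro ⟨x, hx, hx0⟩
  refine hA x.ofLp ?_ ((star_dotProduct_mulVec_eq_inner A x).trans hx0)
  rw [dotProduct_comm, ← EuclideanSpace.inner_eq_star_dotProduct, inner_self_eq_norm_sq_to_K,
    mem_sphere_zero_iff_norm.mp hx]
  simp

lemma IsSectorial.exists_realPart_exp_smul_posDef (hA : IsSectorial A) :
    ∃ θ : ℝ, (ℜ (Complex.exp (Complex.I * θ) • A) : Matrix (Fin n) (Fin n) ℂ).PosDef := by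
  obtain ⟨θ, hθ⟩ := exists_forall_mem_re_exp_mul_pos (convex_numericalRange (toEuclideanLin A))
    (isCompact_numericalRange _).isClosed hA.zero_notMem_numericalRange
  refine ⟨θ, PosDef.of_dotProduct_mulVec_pos (ℜ _).2 fun x hx => ?_⟩
  let y : EuclideanSpace ℂ (Fin n) := WithLp.toLp 2 x
  have hy : y ≠ 0 := fun h => hx (congrArg WithLp.ofLp h)
  have hpos := hθ _ (inner_div_norm_sq_mem_numericalRange (toEuclideanLin A) hy)
  rw [← star_dotProduct_mulVec_eq_inner, ← mul_div_assoc, ← Complex.ofReal_pow,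
    Complex.div_ofReal_re, div_pos_iff_of_pos_right (by positivity)] at hpos
  rw [star_dotProduct_realPart_mulVec, smul_mulVec, dotProduct_smul, smul_eq_mul]
  exact_mod_cast hpos

lemma exists_isSectorialDecomp_of_realPart_posDef
    (hA : (ℜ A : Matrix (Fin n) (Fin n) ℂ).PosDef) :
    ∃ T φ, IsSectorialDecomp A T φ ∧ ∀ k, |φ k| < Real.pi / 2 := by
  obtain ⟨S, μ, hS, rfl⟩ := exists_eq_conjTranspose_mul_diagonal_one_add_I_mul_mul hA
  have hre (k : Fin n) : (1 + Complex.I * (μ k : ℂ)).re = 1 := by simp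
  have hne (k : Fin n) : 1 + Complex.I * (μ k : ℂ) ≠ 0 := fun h => by
    simpa [h] using hre k
  refine ⟨_, _, (IsSectorialDecomp.diagonal hne).conjTranspose_mul_mul hS, fun k => ?_⟩
  rw [Complex.abs_arg_lt_pi_div_two_iff, hre]
  exact Or.inl one_pos

lemma exists_perm_antitone_comp {α : Type*} [LinearOrder α] (f : Fin n → α) :
    ∃ σ : Equiv.Perm (Fin n), Antitone (f ∘ σ) :=
  ⟨Tuple.sort (OrderDual.toDual ∘ f),
    monotone_toDual_comp_iff.mp (Tuple.monotone_sort (OrderDual.toDual ∘ f))⟩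

/-- The midpoint of the range of a finite real family, which the definition of canonical phases
confines to `(-π, π]`. It is `0` for the empty family. -/
def midrange {ι : Type*} (φ : ι → ℝ) : ℝ := ((⨆ i, φ i) + ⨅ i, φ i) / 2

lemma midrange_add_const {ι : Type*} [Finite ι] [Nonempty ι] (φ : ι → ℝ) (c : ℝ) :
    midrange (fun i => φ i + c) = midrange φ + c := by
  rw [midrange, midrange, ← ciSup_add (Set.finite_range φ).bddAbove,
    ← ciInf_add (Set.finite_range φ).bddBelow]
  ring

lemma exists_int_midrange_add_mem_Ioc {ι : Type*} [Finite ι] (φ : ι → ℝ) (c : ℝ) :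
    ∃ m : ℤ, midrange (fun i => φ i + (c + m • (2 * Real.pi))) ∈ Set.Ioc (-Real.pi) Real.pi := by
  rcases isEmpty_or_nonempty ι
  · exact ⟨0, by simp [midrange, Real.iSup_of_isEmpty, Real.iInf_of_isEmpty, Real.pi_pos,
      Real.pi_pos.le]⟩
  · obtain ⟨m, hm, -⟩ :=
      existsUnique_add_zsmul_mem_Ioc Real.two_pi_pos (midrange φ + c) (-Real.pi)
    have hend : -Real.pi + 2 * Real.pi = Real.pi := by ring
    rw [hend, add_assoc, ← midrange_add_const] at hm
    exact ⟨m, hm⟩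

theorem IsSectorial.exists_isCanonicalPhases (hA : IsSectorial A) :
    ∃ φ, IsCanonicalPhases A φ := by
  obtain ⟨θ, hθ⟩ := hA.exists_realPart_exp_smul_posDef
  obtain ⟨T, ψ, hT, hψ⟩ := exists_isSectorialDecomp_of_realPart_posDef hθ
  obtain ⟨σ, hσ⟩ := exists_perm_antitone_comp ψ
  obtain ⟨m, hm⟩ := exists_int_midrange_add_mem_Ioc (ψ ∘ σ) (-θ)
  have hexp : Complex.exp (Complex.I * ((-θ + m • (2 * Real.pi) : ℝ) : ℂ)) *
      Complex.exp (Complex.I * θ) = 1 := by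
    rw [← Complex.exp_add, Complex.exp_eq_one_iff]
    refine ⟨m, ?_⟩
    push_cast [zsmul_eq_mul]
    ring
  have hdecomp := (hT.comp_perm σ).exp_smul (-θ + m • (2 * Real.pi))
  rw [smul_smul, hexp, one_smul] at hdecomp
  refine ⟨_, hσ.add_const _, fun i j => ?_, hm.1, hm.2, _, hdecomp⟩
  have hi := abs_lt.mp (hψ (σ i))
  have hj := abs_lt.mp (hψ (σ j))
  simp only [Function.comp_apply]
  linarith

lemma IsSectorial.isCanonicalPhases_phases (hA : IsSectorial A) :
    IsCanonicalPhases A (phases A) := by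
  rw [phases, dif_pos hA.exists_isCanonicalPhases]
  exact hA.exists_isCanonicalPhases.choose_spec

end CanonicalPhases

/-- there is `R` with `rank R = prank A` and `A - R ≻ 0`. -/
theorem exists_rank_eq_prank_sub_posDef
    (A : Matrix (Fin n) (Fin n) ℂ) (hA : IsSectorial A) :
    ∃ R : Matrix (Fin n) (Fin n) ℂ, R.rank = prank A ∧ (A - R).PosDef := by
  obtain ⟨-, -, -, -, T, hT⟩ := hA.isCanonicalPhases_phases
  exact hT.exists_rank_eq_sub_posDef

end LowPrank
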